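/- Minimizers of Newton's problem in the class of concave functions are not rotationally symmetric: for every M > 0, if u : Ω → [0, M] is concave and minimizes J over all concave functions v : Ω → [0, M], then u is not radially symmetric, i.e., there exist points x, y ∈ Ω with |x| = |y| and u(x) ≠ u(y). -/

import Mathlib

open Set MeasureTheory

/-- The open unit disc in `ℝ²`. -/
noncomputable def Omega : Set (EuclideanSpace ℝ (Fin 2)) :=
  Metric.ball (0 : EuclideanSpace ℝ (Fin 2)) 1

/-- Newton's resistance functional `J(u) = ∫_Ω 1/(|∇u|² + 1) dx`. -/
noncomputable def J (u : EuclideanSpace ℝ (Fin 2) → ℝ) : ℝ :=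
  ∫ x in Omega, 1 / (‖gradient u x‖ ^ 2 + 1)

open Filter Topology

section Radial

variable {E : Type*} [NormedAddCommGroup E] [InnerProductSpace ℝ E] [CompleteSpace E]

theorem hasGradientAt_comp_norm {φ : ℝ → ℝ} {φ' : ℝ} {x : E} (hx : x ≠ 0)
    (h : HasDerivAt φ φ' ‖x‖) :
    HasGradientAt (fun y : E => φ ‖y‖) ((φ' / ‖x‖) • x) x := by
  have hx' : 0 < ‖x‖ := norm_pos_iff.mpr hx
  have h1 := (hasStrictFDerivAt_norm_sq x).hasFDerivAt.sqrt (by positivity)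
  have h2 : (fun y : E => √(‖y‖ ^ 2)) = fun y => ‖y‖ := by
    funext y; exact Real.sqrt_sq (norm_nonneg y)
  rw [h2, Real.sqrt_sq hx'.le] at h1
  have h3 := h.comp_hasFDerivAt x h1
  rw [hasGradientAt_iff_hasFDerivAt]
  refine h3.congr_fderiv ?_
  ext y
  simp only [_root_.smul_apply, smul_eq_mul, InnerProductSpace.toDual_apply_apply,
    inner_smul_left, innerSL_apply_apply, nsmul_eq_mul]
  simp
  field_simp

theorem norm_gradient_of_eventuallyEq_comp_norm {φ : ℝ → ℝ} {u : E → ℝ} {x : E} (hx : x ≠ 0)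
    (h : u =ᶠ[𝓝 x] fun y => φ ‖y‖) : ‖gradient u x‖ = |deriv φ ‖x‖| := by
  have hx' : 0 < ‖x‖ := norm_pos_iff.mpr hx
  by_cases hφ : DifferentiableAt ℝ φ ‖x‖
  · rw [h.gradient_eq, (hasGradientAt_comp_norm hx hφ.hasDerivAt).gradient, norm_smul,
      Real.norm_eq_abs, abs_div, abs_norm]
    field_simp
  · rw [deriv_zero_of_not_differentiableAt hφ, abs_zero, norm_eq_zero]
    apply gradient_eq_zero_of_not_differentiableAt
    intro hu
    apply hφ
    have hu' : DifferentiableAt ℝ (fun y : E => φ ‖y‖) x := hu.congr_of_eventuallyEq h.symm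
    have hc : DifferentiableAt ℝ (fun r : ℝ => (r / ‖x‖) • x) ‖x‖ := by fun_prop
    have hcx : (‖x‖ / ‖x‖) • x = x := by rw [div_self hx'.ne', one_smul]
    have h4 : DifferentiableAt ℝ ((fun y : E => φ ‖y‖) ∘ fun r : ℝ => (r / ‖x‖) • x) ‖x‖ := by
      apply DifferentiableAt.comp
      · rwa [hcx]
      · exact hc
    refine h4.congr_of_eventuallyEq ?_
    filter_upwards [lt_mem_nhds hx'] with r hr
    simp only [Function.comp, norm_smul, Real.norm_eq_abs, abs_div, abs_norm]
    rw [abs_of_pos hr, div_mul_cancel₀ _ hx'.ne']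

theorem measurable_norm_gradient [MeasurableSpace E] [BorelSpace E] (u : E → ℝ) :
    Measurable fun x => ‖gradient u x‖ := by
  have : (fun x => ‖gradient u x‖) = fun x => ‖fderiv ℝ u x‖ := by
    funext x
    rw [← toDual_gradient, LinearIsometryEquiv.norm_map]
  rw [this]
  exact (measurable_fderiv ℝ u).norm

end Radial

/-- Integration in polar coordinates of a radial function over the disc. -/
theorem setIntegral_Omega_comp_norm (F : ℝ → ℝ) :
    ∫ x in Omega, F ‖x‖ = 2 * volume.real Omega * ∫ r in Ioo (0 : ℝ) 1, r * F r := by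
  have h := integral_fun_norm_addHaar (volume : Measure (EuclideanSpace ℝ (Fin 2)))
    ((Iio (1 : ℝ)).indicator F)
  have h1 : (fun x : EuclideanSpace ℝ (Fin 2) => (Iio (1 : ℝ)).indicator F ‖x‖) =
      Omega.indicator fun x => F ‖x‖ := by
    funext x
    simp [indicator, Omega]
  have h2 : (fun r : ℝ => r ^ (Module.finrank ℝ (EuclideanSpace ℝ (Fin 2)) - 1) •
      (Iio (1 : ℝ)).indicator F r) = (Iio (1 : ℝ)).indicator fun r => r * F r := by
    funext r
    by_cases hr : r < 1 <;> simp [indicator, hr]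
  rw [h1, h2, integral_indicator (by exact Metric.isOpen_ball.measurableSet),
    setIntegral_indicator measurableSet_Iio] at h
  rw [h]
  simp only [finrank_euclideanSpace, Fintype.card_fin, Omega, nsmul_eq_mul, smul_eq_mul]
  rw [Ioi_inter_Iio]
  push_cast
  ring

theorem integrableOn_Omega_resistance {g : EuclideanSpace ℝ (Fin 2) → ℝ} (hg : Measurable g) :
    IntegrableOn (fun x => 1 / (g x ^ 2 + 1)) Omega := by
  have : IsFiniteMeasure (volume.restrict Omega) :=
    ⟨by simp [Omega]⟩
  have hm : Measurable fun x => 1 / (g x ^ 2 + 1) := by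
    simp only [one_div]
    fun_prop
  refine Integrable.of_bound (C := 1) hm.aestronglyMeasurable (Eventually.of_forall fun x => ?_)
  rw [Real.norm_of_nonneg (by positivity)]
  rw [div_le_one (by positivity)]
  nlinarith [sq_nonneg (g x)]

/-- A nonincreasing profile of total height at most `M` has resistance at least that of a
profile which minimizes the Lagrangian pointwise. -/
theorem setIntegral_resistance_le_of_lagrangian {M lam : ℝ} (hlam : 0 ≤ lam) {s g : ℝ → ℝ}
    (hs : Measurable s) (hg : Measurable g) (hg0 : ∀ r ∈ Ioo (0 : ℝ) 1, 0 ≤ g r)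
    (hsi : IntegrableOn s (Ioo 0 1)) (hgi : IntegrableOn g (Ioo 0 1))
    (hsM : ∫ r in Ioo (0 : ℝ) 1, s r = M) (hgM : ∫ r in Ioo (0 : ℝ) 1, g r ≤ M)
    (hopt : ∀ r ∈ Ioo (0 : ℝ) 1, ∀ τ, 0 ≤ τ →
      r * (1 / (s r ^ 2 + 1)) + lam * s r ≤ r * (1 / (τ ^ 2 + 1)) + lam * τ) :
    ∫ r in Ioo (0 : ℝ) 1, r * (1 / (s r ^ 2 + 1)) ≤
      ∫ r in Ioo (0 : ℝ) 1, r * (1 / (g r ^ 2 + 1)) := by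
  have hint : ∀ {k : ℝ → ℝ}, Measurable k →
      IntegrableOn (fun r => r * (1 / (k r ^ 2 + 1))) (Ioo (0 : ℝ) 1) := by
    intro k hk
    refine Measure.integrableOn_of_bounded (M := 1) (by simp) (by fun_prop) ?_
    rw [ae_restrict_iff' measurableSet_Ioo]
    refine Eventually.of_forall fun r hr => ?_
    have : 1 / (k r ^ 2 + 1) ≤ 1 := by
      rw [div_le_one (by positivity)]
      nlinarith [sq_nonneg (k r)]
    rw [Real.norm_of_nonneg (mul_nonneg hr.1.le (by positivity))]
    exact mul_le_one₀ hr.2.le (by positivity) this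
  have h := setIntegral_mono_on ((hint hs).add (hsi.const_mul lam))
    ((hint hg).add (hgi.const_mul lam)) measurableSet_Ioo
    (fun r hr => hopt r hr (g r) (hg0 r hr))
  rw [integral_add' (hint hs) (hsi.const_mul lam), integral_add' (hint hg) (hgi.const_mul lam),
    integral_const_mul, integral_const_mul, hsM] at h
  nlinarith [mul_le_mul_of_nonneg_left hgM hlam]

theorem resistance_le_J_of_radial {M lam : ℝ} (hlam : 0 ≤ lam) {s : ℝ → ℝ}
    (hs : Measurable s) (hsi : IntegrableOn s (Ioo 0 1))
    (hsM : ∫ r in Ioo (0 : ℝ) 1, s r = M)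
    (hopt : ∀ r ∈ Ioo (0 : ℝ) 1, ∀ τ, 0 ≤ τ →
      r * (1 / (s r ^ 2 + 1)) + lam * s r ≤ r * (1 / (τ ^ 2 + 1)) + lam * τ)
    {u : EuclideanSpace ℝ (Fin 2) → ℝ}
    (hu : ConcaveOn ℝ Omega u) (huM : ∀ x ∈ Omega, u x ∈ Icc 0 M)
    (hrad : ∀ x ∈ Omega, ∀ y ∈ Omega, ‖x‖ = ‖y‖ → u x = u y) :
    ∫ x in Omega, 1 / (s ‖x‖ ^ 2 + 1) ≤ J u := by
  obtain ⟨e, he⟩ : ∃ e : EuclideanSpace ℝ (Fin 2), ‖e‖ = 1 := exists_norm_eq _ zero_le_one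
  have hmem : ∀ r : ℝ, r • e ∈ Omega ↔ |r| < 1 := by
    intro r
    simp [Omega, norm_smul, he]
  set φ : ℝ → ℝ := fun r => if r < 1 then u (r • e) else 0 with hφ
  have hφu : ∀ x ∈ Omega, u x = φ ‖x‖ := by
    intro x hx
    have hx1 : ‖x‖ < 1 := by simpa [Omega] using hx
    simp only [hφ, hx1, if_true]
    exact hrad x hx _ ((hmem _).2 (by simpa using hx1)) (by simp [norm_smul, he])
  have hanti : AntitoneOn φ (Icc 0 1) := by
    intro a ha b hb hab
    simp only [hφ]
    by_cases hb1 : b < 1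
    · have ha1 : a < 1 := hab.trans_lt hb1
      simp only [hb1, ha1, if_true]
      rcases hb.1.eq_or_lt with hb0 | hb0
      · have : a = b := by linarith [ha.1]
        rw [this]
      have hbm : b • e ∈ Omega := (hmem _).2 (by rw [abs_of_pos hb0]; exact hb1)
      have hbm' : (-b) • e ∈ Omega := (hmem _).2 (by rw [abs_neg, abs_of_pos hb0]; exact hb1)
      have hα : 0 ≤ (b + a) / (2 * b) := div_nonneg (by linarith [ha.1]) (by linarith)
      have hβ : 0 ≤ (b - a) / (2 * b) := div_nonneg (by linarith) (by linarith)
      have h := hu.2 hbm hbm' hα hβ (by field_simp; ring)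
      rw [hrad _ hbm' _ hbm (by simp [norm_smul]), smul_smul, smul_smul, ← add_smul, ← add_smul]
        at h
      have e1 : (b + a) / (2 * b) * b + (b - a) / (2 * b) * -b = a := by field_simp; ring
      have e2 : (b + a) / (2 * b) + (b - a) / (2 * b) = 1 := by field_simp; ring
      rw [e1, e2, one_smul] at h
      exact h
    · simp only [hb1, if_false]
      split_ifs with ha1
      · exact (huM _ ((hmem _).2 (by rw [abs_of_nonneg ha.1]; exact ha1))).1
      · exact le_rfl
  have hmono : MonotoneOn (fun r => -φ r) (uIcc 0 1) := by
    rw [uIcc_of_le zero_le_one]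
    exact hanti.neg
  have hder : deriv (fun r => -φ r) = fun r => - deriv φ r := by
    funext r
    exact deriv.fun_neg
  have hnonneg : ∀ r ∈ Ioo (0 : ℝ) 1, deriv φ r ≤ 0 := by
    intro r hr
    rw [← derivWithin_of_mem_nhds (Icc_mem_nhds hr.1 hr.2)]
    exact hanti.derivWithin_nonpos
  have habs : EqOn (fun r => |deriv φ r|) (deriv fun r => -φ r) (Ioo 0 1) := by
    intro r hr
    rw [hder]
    exact abs_of_nonpos (hnonneg r hr)
  have hi := (intervalIntegrable_iff_integrableOn_Ioo_of_le zero_le_one).1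
    hmono.intervalIntegrable_deriv
  have hI := hmono.intervalIntegral_deriv_mem_uIcc
  have h01 : φ 1 = 0 ∧ φ 0 ∈ Icc 0 M := by
    refine ⟨by simp [hφ], ?_⟩
    have := huM ((0 : ℝ) • e) ((hmem 0).2 (by simp))
    simpa [hφ] using this
  rw [uIcc_of_le (by linarith [h01.1, h01.2.1]), intervalIntegral.integral_of_le zero_le_one,
    integral_Ioc_eq_integral_Ioo] at hI
  have hJ : J u = ∫ x in Omega, 1 / (|deriv φ ‖x‖| ^ 2 + 1) := by
    refine integral_congr_ae ?_
    rw [EventuallyEq, ae_restrict_iff' (by exact Metric.isOpen_ball.measurableSet)]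
    have h0 : ∀ᵐ x : EuclideanSpace ℝ (Fin 2), x ≠ 0 := by simp [ae_iff]
    filter_upwards [h0] with x hx hxO
    rw [norm_gradient_of_eventuallyEq_comp_norm (φ := φ) hx]
    filter_upwards [Metric.isOpen_ball.mem_nhds hxO] with y hy using hφu y hy
  rw [hJ, setIntegral_Omega_comp_norm fun r => 1 / (s r ^ 2 + 1),
    setIntegral_Omega_comp_norm fun r => 1 / (|deriv φ r| ^ 2 + 1)]
  refine mul_le_mul_of_nonneg_left ?_ (by positivity)
  refine setIntegral_resistance_le_of_lagrangian hlam hs (measurable_deriv φ).abs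
    (fun r _ => abs_nonneg _) hsi
    ((integrableOn_congr_fun habs measurableSet_Ioo).2 hi) hsM ?_ hopt
  rw [setIntegral_congr_fun measurableSet_Ioo habs]
  linarith [hI.2, h01.1, h01.2.2]

/-- The Newton profile in slope parametrization: `ρ = (1 + s²)² / (2 s)` can be solved for
`s ≥ 1` whenever `ρ ≥ 2`. -/
theorem exists_newton_slope (ρ : ℝ) : ∃ s : ℝ, 1 ≤ s ∧ (1 + s ^ 2) ^ 2 / (2 * s) = max ρ 2 := by
  set m := max ρ 2 with hm
  have hm2 : 2 ≤ m := le_max_right _ _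
  have hc : ContinuousOn (fun s : ℝ => (1 + s ^ 2) ^ 2 / (2 * s)) (Icc 1 m) := by
    refine ContinuousOn.div (by fun_prop) (by fun_prop) fun s hs => ?_
    have := hs.1
    positivity
  have h := intermediate_value_Icc (by linarith : (1 : ℝ) ≤ m) hc
  have hmem : m ∈ Icc ((1 + (1 : ℝ) ^ 2) ^ 2 / (2 * 1)) ((1 + m ^ 2) ^ 2 / (2 * m)) := by
    constructor
    · norm_num; exact hm2
    · rw [le_div_iff₀ (by positivity)]
      nlinarith [sq_nonneg m, sq_nonneg (m ^ 2)]
  obtain ⟨s, hs, hsm⟩ := h hmem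
  exact ⟨s, hs.1, hsm⟩

noncomputable def newtonSlope (ρ : ℝ) : ℝ := (exists_newton_slope ρ).choose

theorem one_le_newtonSlope (ρ : ℝ) : 1 ≤ newtonSlope ρ := (exists_newton_slope ρ).choose_spec.1

theorem newtonSlope_spec (ρ : ℝ) :
    (1 + newtonSlope ρ ^ 2) ^ 2 / (2 * newtonSlope ρ) = max ρ 2 :=
  (exists_newton_slope ρ).choose_spec.2

theorem newton_radius_sub {a b : ℝ} (ha : 1 ≤ a) (hb : 1 ≤ b) :
    (1 + b ^ 2) ^ 2 / (2 * b) - (1 + a ^ 2) ^ 2 / (2 * a) =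
      (b - a) * (1 + (a ^ 2 + a * b + b ^ 2) / 2 - 1 / (2 * (a * b))) := by
  have : 0 < a := by linarith
  have : 0 < b := by linarith
  field_simp
  ring

theorem one_le_newton_radius_factor {a b : ℝ} (ha : 1 ≤ a) (hb : 1 ≤ b) :
    1 ≤ 1 + (a ^ 2 + a * b + b ^ 2) / 2 - 1 / (2 * (a * b)) := by
  have hab : 1 ≤ a * b := one_le_mul_of_one_le_of_one_le ha hb
  have : 1 / (2 * (a * b)) ≤ 1 / 2 := by
    apply one_div_le_one_div_of_le <;> linarith
  nlinarith [sq_nonneg a, sq_nonneg b]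

theorem newtonSlope_sub_mem {x y : ℝ} (h : x ≤ y) :
    newtonSlope y - newtonSlope x ∈ Icc 0 (y - x) := by
  have h1 := newton_radius_sub (one_le_newtonSlope x) (one_le_newtonSlope y)
  have h2 := one_le_newton_radius_factor (one_le_newtonSlope x) (one_le_newtonSlope y)
  rw [newtonSlope_spec, newtonSlope_spec] at h1
  have h3 : 0 ≤ max y 2 - max x 2 := sub_nonneg.2 (max_le_max_right _ h)
  have h4 : max y 2 - max x 2 ≤ y - x := by
    rcases max_cases y 2 with ⟨e, _⟩ | ⟨e, _⟩ <;> rcases max_cases x 2 with ⟨e', _⟩ | ⟨e', _⟩ <;>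
      rw [e, e'] <;> linarith
  constructor
  · by_contra! hneg
    nlinarith
  · by_contra! hneg
    nlinarith

theorem monotone_newtonSlope : Monotone newtonSlope := fun _ _ h =>
  sub_nonneg.1 (newtonSlope_sub_mem h).1

theorem continuous_newtonSlope : Continuous newtonSlope := by
  have : LipschitzWith 1 newtonSlope := by
    refine LipschitzWith.of_le_add fun x y => ?_
    rcases le_total x y with h | h
    · have := monotone_newtonSlope h
      linarith [dist_nonneg (x := x) (y := y)]
    · have := (newtonSlope_sub_mem h).2
      rw [Real.dist_eq, abs_of_nonneg (by linarith)]
      linarith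
  exact this.continuous

theorem newtonSlope_of_le_two {ρ : ℝ} (h : ρ ≤ 2) : newtonSlope ρ = 1 := by
  have h1 := newton_radius_sub le_rfl (one_le_newtonSlope ρ)
  have h2 := one_le_newton_radius_factor le_rfl (one_le_newtonSlope ρ)
  rw [newtonSlope_spec, max_eq_right h] at h1
  norm_num at h1
  rcases h1 with h1 | h1
  · linarith
  · norm_num at h2
    linarith

theorem le_newtonSlope {N ρ : ℝ} (hN : 1 ≤ N) (h : (1 + N ^ 2) ^ 2 / (2 * N) ≤ ρ) :
    N ≤ newtonSlope ρ := by
  have h1 := newton_radius_sub hN (one_le_newtonSlope ρ)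
  have h2 := one_le_newton_radius_factor hN (one_le_newtonSlope ρ)
  rw [newtonSlope_spec] at h1
  have := le_max_left ρ 2
  by_contra! hneg
  nlinarith

theorem le_newtonSlope_sub {x y T : ℝ} (h : x ≤ y) (hy : y ≤ T) :
    (max y 2 - max x 2) / (1 + 3 / 2 * newtonSlope T ^ 2) ≤ newtonSlope y - newtonSlope x := by
  have h1 := newton_radius_sub (one_le_newtonSlope x) (one_le_newtonSlope y)
  rw [newtonSlope_spec, newtonSlope_spec] at h1
  have hxy := monotone_newtonSlope h
  have hyT := monotone_newtonSlope hy
  have hx1 := one_le_newtonSlope x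
  have hy1 := one_le_newtonSlope y
  rw [div_le_iff₀ (by positivity), h1]
  refine mul_le_mul_of_nonneg_left ?_ (by linarith)
  have : 0 ≤ 1 / (2 * (newtonSlope x * newtonSlope y)) := by positivity
  nlinarith

/-- The slope `s ≥ 1` of the Newton profile minimizes the Lagrangian at its radius. -/
theorem newton_lagrangian_le {lam r s τ : ℝ} (hlam : 0 ≤ lam) (hs : 1 ≤ s) (hτ : 0 ≤ τ)
    (hr : r = lam * ((1 + s ^ 2) ^ 2 / (2 * s))) :
    r * (1 / (s ^ 2 + 1)) + lam * s ≤ r * (1 / (τ ^ 2 + 1)) + lam * τ := by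
  have hs0 : 0 < s := by linarith
  have key : r * (1 / (τ ^ 2 + 1)) + lam * τ - (r * (1 / (s ^ 2 + 1)) + lam * s) =
      lam * ((s - τ) ^ 2 * (s ^ 2 + 2 * s * τ - 1) / (2 * s * (τ ^ 2 + 1))) := by
    rw [hr]
    field_simp
    ring
  have : 0 ≤ lam * ((s - τ) ^ 2 * (s ^ 2 + 2 * s * τ - 1) / (2 * s * (τ ^ 2 + 1))) := by
    refine mul_nonneg hlam (div_nonneg (mul_nonneg (sq_nonneg _) ?_) (by positivity))
    nlinarith [mul_nonneg hs0.le hτ]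
  linarith

theorem zero_lagrangian_le {lam r τ : ℝ} (hr0 : 0 ≤ r) (hr : r ≤ 2 * lam) (hτ : 0 ≤ τ) :
    r * (1 / ((0 : ℝ) ^ 2 + 1)) + lam * 0 ≤ r * (1 / (τ ^ 2 + 1)) + lam * τ := by
  have key : r * (1 / (τ ^ 2 + 1)) + lam * τ - (r * (1 / ((0 : ℝ) ^ 2 + 1)) + lam * 0) =
      τ * (lam * (τ ^ 2 + 1) - r * τ) / (τ ^ 2 + 1) := by
    field_simp
    ring
  have : 0 ≤ τ * (lam * (τ ^ 2 + 1) - r * τ) / (τ ^ 2 + 1) := by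
    refine div_nonneg (mul_nonneg hτ ?_) (by positivity)
    nlinarith [mul_nonneg hr0 (sq_nonneg (τ - 1)), mul_nonneg (sub_nonneg.2 hr) (sq_nonneg τ)]
  linarith

theorem exists_integral_newtonSlope_eq {M : ℝ} (hM : 0 < M) :
    ∃ T, 2 < T ∧ ∫ ρ in (2 : ℝ)..T, newtonSlope ρ = M * T := by
  have hi : ∀ a b, IntervalIntegrable newtonSlope volume a b :=
    fun a b => continuous_newtonSlope.intervalIntegrable a b
  set h : ℝ → ℝ := fun T => (∫ ρ in (2 : ℝ)..T, newtonSlope ρ) - M * T with hh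
  have hc : Continuous h := (intervalIntegral.continuous_primitive hi 2).sub (by fun_prop)
  set N := 4 * M + 1 with hN
  have hN1 : 1 ≤ N := by linarith
  set R := (1 + N ^ 2) ^ 2 / (2 * N) with hR
  have hR2 : 2 ≤ R := by
    rw [hR, le_div_iff₀ (by positivity)]
    nlinarith [sq_nonneg (N ^ 2), sq_nonneg (N - 1)]
  have hpos : 0 ≤ h (2 * R) := by
    have h1 : ∫ ρ in (2 : ℝ)..(2 * R), newtonSlope ρ =
        (∫ ρ in (2 : ℝ)..R, newtonSlope ρ) + ∫ ρ in R..(2 * R), newtonSlope ρ :=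
      (intervalIntegral.integral_add_adjacent_intervals (hi _ _) (hi _ _)).symm
    have h2 : 0 ≤ ∫ ρ in (2 : ℝ)..R, newtonSlope ρ :=
      intervalIntegral.integral_nonneg hR2 fun x _ => by linarith [one_le_newtonSlope x]
    have h3 : ∫ _ in R..(2 * R), N ≤ ∫ ρ in R..(2 * R), newtonSlope ρ :=
      intervalIntegral.integral_mono_on (by linarith) (by simp) (hi _ _)
        fun x hx => le_newtonSlope hN1 hx.1
    rw [intervalIntegral.integral_const, smul_eq_mul] at h3
    simp only [hh]
    rw [h1]
    nlinarith
  have hneg : h 2 < 0 := by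
    simp only [hh, intervalIntegral.integral_same]
    linarith
  obtain ⟨T, hT, hT0⟩ := intermediate_value_Icc (by linarith : (2 : ℝ) ≤ 2 * R) hc.continuousOn
    ⟨hneg.le, hpos⟩
  refine ⟨T, lt_of_le_of_ne hT.1 ?_, sub_eq_zero.1 hT0⟩
  rintro rfl
  exact hneg.ne hT0

/-- The radial minimizer has a flat part of radius `ρ`, and its slope `t` outside of it extends
to a strongly increasing function on the whole interval. -/
theorem exists_newton_profile {M : ℝ} (hM : 0 < M) :
    ∃ (ρ lam c : ℝ) (t : ℝ → ℝ), ρ ∈ Ioo 0 1 ∧ 0 ≤ lam ∧ 0 < c ∧ Continuous t ∧ t 0 = 0 ∧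
      (∀ a ∈ Icc (0 : ℝ) 1, ∀ b ∈ Icc (0 : ℝ) 1, a ≤ b → c * (b - a) ≤ t b - t a) ∧
      ∫ r in ρ..1, t r = M ∧
      ∀ r ∈ Ioo (0 : ℝ) 1, ∀ τ, 0 ≤ τ →
        r * (1 / ((if r ≤ ρ then 0 else t r) ^ 2 + 1)) + lam * (if r ≤ ρ then 0 else t r) ≤
          r * (1 / (τ ^ 2 + 1)) + lam * τ := by
  obtain ⟨T, hT, hTM⟩ := exists_integral_newtonSlope_eq hM
  have hT0 : 0 < T := by linarith
  have hlt : 2 / T < 1 := by rw [div_lt_one hT0]; exact hT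
  have ht1 : ∀ r, 2 / T ≤ r → min (T * r / 2) 1 = 1 := by
    intro r hr
    rw [div_le_iff₀ hT0] at hr
    exact min_eq_right (by linarith)
  have hS := one_le_newtonSlope T
  have hK : 2 ≤ 1 + 3 / 2 * newtonSlope T ^ 2 := by nlinarith
  refine ⟨2 / T, 1 / T, T / (1 + 3 / 2 * newtonSlope T ^ 2),
    fun r => newtonSlope (T * r) + min (T * r / 2) 1 - 1, ⟨by positivity, hlt⟩, by positivity,
    by positivity, ?_, ?_, ?_, ?_, ?_⟩
  · have := continuous_newtonSlope
    fun_prop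
  · simp [newtonSlope_of_le_two]
  · intro a ha b hb hab
    have hab' : T * a ≤ T * b := mul_le_mul_of_nonneg_left hab hT0.le
    have h1 := le_newtonSlope_sub hab' (mul_le_of_le_one_right hT0.le hb.2)
    have h2 : ∀ z : ℝ, min (z / 2) 1 = (z + 2 - max z 2) / 2 := by
      intro z
      rcases max_cases z 2 with ⟨e, _⟩ | ⟨e, _⟩
      · rw [e, min_eq_right (by linarith)]; ring
      · rw [e, min_eq_left (by linarith)]; ring
    have h3 : 0 ≤ T * b - T * a - (max (T * b) 2 - max (T * a) 2) := by
      rcases max_cases (T * b) 2 with ⟨e, _⟩ | ⟨e, _⟩ <;>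
        rcases max_cases (T * a) 2 with ⟨e', _⟩ | ⟨e', _⟩ <;> rw [e, e'] <;> linarith
    have h4 : (T * b - T * a - (max (T * b) 2 - max (T * a) 2)) /
        (1 + 3 / 2 * newtonSlope T ^ 2) ≤
        (T * b - T * a - (max (T * b) 2 - max (T * a) 2)) / 2 :=
      div_le_div_of_nonneg_left h3 (by norm_num) hK
    have h5 : T / (1 + 3 / 2 * newtonSlope T ^ 2) * (b - a) =
        (max (T * b) 2 - max (T * a) 2) / (1 + 3 / 2 * newtonSlope T ^ 2) +
        (T * b - T * a - (max (T * b) 2 - max (T * a) 2)) /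
          (1 + 3 / 2 * newtonSlope T ^ 2) := by ring
    simp only [h2]
    linarith
  · have h1 : ∫ r in (2 / T)..1, (newtonSlope (T * r) + min (T * r / 2) 1 - 1) =
        ∫ r in (2 / T)..1, newtonSlope (T * r) := by
      refine intervalIntegral.integral_congr fun r hr => ?_
      rw [uIcc_of_le hlt.le] at hr
      simp only [ht1 r hr.1]
      ring
    rw [h1, intervalIntegral.integral_comp_mul_left _ hT0.ne', mul_div_cancel₀ _ hT0.ne', mul_one,
      hTM, smul_eq_mul]
    field_simp
  · intro r hr τ hτ
    split_ifs with hρ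
    · exact zero_lagrangian_le hr.1.le (by rw [mul_one_div]; exact hρ) hτ
    · push Not at hρ
      simp only [ht1 r hρ.le, add_sub_cancel_right]
      refine newton_lagrangian_le (by positivity) (one_le_newtonSlope _) hτ ?_
      rw [newtonSlope_spec, max_eq_left]
      · field_simp
      · rw [div_lt_iff₀ hT0] at hρ
        linarith

theorem integral_mul_coordinates (a b : ℝ → ℝ) :
    ∫ x : EuclideanSpace ℝ (Fin 2), a (x 0) * b (x 1) = (∫ s, a s) * ∫ s, b s := by
  have h := integral_fintype_prod_volume_eq_prod (ι := Fin 2) (fun i => ![a, b] i)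
  simp only [Fin.prod_univ_two, Matrix.cons_val_zero, Matrix.cons_val_one] at h
  rw [← h]
  exact (PiLp.volume_preserving_ofLp (Fin 2)).integral_comp
    (MeasurableEquiv.toLp 2 (Fin 2 → ℝ)).symm.measurableEmbedding fun y => a (y 0) * b (y 1)

theorem hasGradientAt_mul_coordinates {A B : ℝ → ℝ} (hA : Differentiable ℝ A)
    (hB : Differentiable ℝ B) (x : EuclideanSpace ℝ (Fin 2)) :
    HasGradientAt (fun y : EuclideanSpace ℝ (Fin 2) => A (y 0) * B (y 1))
      !₂[deriv A (x 0) * B (x 1), A (x 0) * deriv B (x 1)] x := by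
  have hp : ∀ i : Fin 2, HasFDerivAt (fun y : EuclideanSpace ℝ (Fin 2) => y i)
      (EuclideanSpace.proj i : EuclideanSpace ℝ (Fin 2) →L[ℝ] ℝ) x :=
    fun i => (EuclideanSpace.proj i : EuclideanSpace ℝ (Fin 2) →L[ℝ] ℝ).hasFDerivAt
  have h := ((hA (x 0)).hasDerivAt.comp_hasFDerivAt x (hp 0)).mul
    ((hB (x 1)).hasDerivAt.comp_hasFDerivAt x (hp 1))
  rw [hasGradientAt_iff_hasFDerivAt]
  refine h.congr_fderiv ?_
  ext y
  simp [InnerProductSpace.toDual_apply_apply, PiLp.inner_apply, Fin.sum_univ_two]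
  ring

theorem convexOn_univ_of_lines {V : Type*} [AddCommGroup V] [Module ℝ V] {F : V → ℝ}
    (h : ∀ x d : V, ConvexOn ℝ univ fun s : ℝ => F (x + s • d)) : ConvexOn ℝ univ F := by
  refine ⟨convex_univ, fun x _ y _ a b ha hb hab => ?_⟩
  have := (h x (y - x)).2 (mem_univ 0) (mem_univ 1) ha hb hab
  simp only [smul_eq_mul, mul_zero, mul_one, zero_add, zero_smul, add_zero, one_smul,
    add_sub_cancel] at this
  have e : x + b • (y - x) = a • x + b • y := by
    rw [← eq_sub_iff_add_eq] at hab
    rw [hab]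
    module
  rwa [e] at this

/-- A uniform bound on a function of one variable and on its first two derivatives. -/
def DerivBound (f : ℝ → ℝ) (L : ℝ) : Prop :=
  ∀ s, |f s| ≤ L ∧ |deriv f s| ≤ L ∧ |deriv (deriv f) s| ≤ L

theorem DerivBound.nonneg {f : ℝ → ℝ} {L : ℝ} (h : DerivBound f L) : 0 ≤ L :=
  (abs_nonneg _).trans (h 0).1

theorem DerivBound.const_mul {f : ℝ → ℝ} {L : ℝ} (h : DerivBound f L) (ε : ℝ) :
    DerivBound (fun s => ε * f s) (|ε| * L) := by
  have h1 : deriv (fun s => ε * f s) = fun s => ε * deriv f s := by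
    funext s
    exact deriv_const_mul_field ε
  have h2 : deriv (fun s => ε * deriv f s) = fun s => ε * deriv (deriv f) s := by
    funext s
    exact deriv_const_mul_field ε
  intro s
  simp only [h1, h2, abs_mul]
  exact ⟨mul_le_mul_of_nonneg_left (h s).1 (abs_nonneg _),
    mul_le_mul_of_nonneg_left (h s).2.1 (abs_nonneg _),
    mul_le_mul_of_nonneg_left (h s).2.2 (abs_nonneg _)⟩

theorem HasCompactSupport.exists_derivBound {f : ℝ → ℝ} (hf : ContDiff ℝ 2 f)
    (hs : HasCompactSupport f) : ∃ L, 0 < L ∧ DerivBound f L := by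
  have hf' : ContDiff ℝ 1 (deriv f) := hf.iterate_deriv' 1 1
  obtain ⟨C₀, h₀⟩ := hs.exists_bound_of_continuous hf.continuous
  obtain ⟨C₁, h₁⟩ := hs.deriv.exists_bound_of_continuous hf'.continuous
  obtain ⟨C₂, h₂⟩ := hs.deriv.deriv.exists_bound_of_continuous
    (hf'.continuous_deriv le_rfl)
  refine ⟨|C₀| + |C₁| + |C₂| + 1, by positivity, fun s => ⟨?_, ?_, ?_⟩⟩
  · have := h₀ s
    rw [Real.norm_eq_abs] at this
    linarith [le_abs_self C₀, abs_nonneg C₁, abs_nonneg C₂]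
  · have := h₁ s
    rw [Real.norm_eq_abs] at this
    linarith [le_abs_self C₁, abs_nonneg C₀, abs_nonneg C₂]
  · have := h₂ s
    rw [Real.norm_eq_abs] at this
    linarith [le_abs_self C₂, abs_nonneg C₁, abs_nonneg C₀]

theorem convexOn_sq_norm_add_mul_coordinates {A B : ℝ → ℝ} {a b : ℝ} (hA : ContDiff ℝ 2 A)
    (hB : ContDiff ℝ 2 B) (hAa : DerivBound A a) (hBb : DerivBound B b) :
    ConvexOn ℝ univ fun x : EuclideanSpace ℝ (Fin 2) =>
      a * b * ‖x‖ ^ 2 + A (x 0) * B (x 1) := by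
  have dA : Differentiable ℝ A := hA.differentiable (by norm_num)
  have dB : Differentiable ℝ B := hB.differentiable (by norm_num)
  have dA' : Differentiable ℝ (deriv A) :=
    (hA.iterate_deriv' 1 1).differentiable (by norm_num)
  have dB' : Differentiable ℝ (deriv B) :=
    (hB.iterate_deriv' 1 1).differentiable (by norm_num)
  refine convexOn_univ_of_lines fun x d => ?_
  have hl : ∀ i s, HasDerivAt (fun s : ℝ => x i + s * d i) (d i) s := by
    intro i s
    simpa using ((hasDerivAt_id s).mul_const (d i)).const_add (x i)
  have cA := fun s => (dA (x 0 + s * d 0)).hasDerivAt.comp s (hl 0 s)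
  have cB := fun s => (dB (x 1 + s * d 1)).hasDerivAt.comp s (hl 1 s)
  have cA' := fun s => (dA' (x 0 + s * d 0)).hasDerivAt.comp s (hl 0 s)
  have cB' := fun s => (dB' (x 1 + s * d 1)).hasDerivAt.comp s (hl 1 s)
  have hF : (fun s : ℝ => a * b * ‖x + s • d‖ ^ 2 + A ((x + s • d) 0) * B ((x + s • d) 1)) =
      fun s => a * b * ((x 0 + s * d 0) ^ 2 + (x 1 + s * d 1) ^ 2) +
        A (x 0 + s * d 0) * B (x 1 + s * d 1) := by
    funext s
    simp [EuclideanSpace.norm_sq_eq, Fin.sum_univ_two]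
  rw [hF]
  have h1 := fun s => ((((hl 0 s).pow 2).add ((hl 1 s).pow 2)).const_mul (a * b)).add
    ((cA s).mul (cB s))
  have h2 := fun s => ((((hl 0 s).mul_const (2 * d 0)).add
    ((hl 1 s).mul_const (2 * d 1))).const_mul (a * b)).add
    ((((cA' s).mul_const (d 0)).mul (cB s)).add ((cA s).mul ((cB' s).mul_const (d 1))))
  have e1 : deriv (fun s : ℝ => a * b * ((x 0 + s * d 0) ^ 2 + (x 1 + s * d 1) ^ 2) +
        A (x 0 + s * d 0) * B (x 1 + s * d 1)) = fun s =>
      a * b * ((x 0 + s * d 0) * (2 * d 0) + (x 1 + s * d 1) * (2 * d 1)) +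
        (deriv A (x 0 + s * d 0) * d 0 * B (x 1 + s * d 1) +
          A (x 0 + s * d 0) * (deriv B (x 1 + s * d 1) * d 1)) := by
    funext s
    refine (h1 s).deriv.trans ?_
    simp only [Function.comp]
    push_cast
    ring
  refine convexOn_univ_of_deriv2_nonneg (fun s => (h1 s).differentiableAt) ?_ fun s => ?_
  · rw [e1]
    exact fun s => (h2 s).differentiableAt
  · rw [Function.iterate_succ, Function.iterate_one, Function.comp, e1]
    refine le_of_le_of_eq ?_ (h2 s).deriv.symm
    simp only [Function.comp]
    set p := x 0 + s * d 0
    set q := x 1 + s * d 1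
    have b1 : |deriv (deriv A) p * B q| ≤ a * b := by
      rw [abs_mul]; exact mul_le_mul (hAa p).2.2 (hBb q).1 (abs_nonneg _) hAa.nonneg
    have b2 : |deriv A p * deriv B q| ≤ a * b := by
      rw [abs_mul]; exact mul_le_mul (hAa p).2.1 (hBb q).2.1 (abs_nonneg _) hAa.nonneg
    have b3 : |A p * deriv (deriv B) q| ≤ a * b := by
      rw [abs_mul]; exact mul_le_mul (hAa p).1 (hBb q).2.2 (abs_nonneg _) hAa.nonneg
    rw [abs_le] at b1 b2 b3
    have i1 := mul_le_mul_of_nonneg_right b1.1 (sq_nonneg (d 0))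
    have i3 := mul_le_mul_of_nonneg_right b3.1 (sq_nonneg (d 1))
    have i2 := mul_nonneg (sub_nonneg.2 b2.2) (sq_nonneg (d 0 - d 1))
    have i4 := mul_nonneg (neg_le_iff_add_nonneg.1 b2.1) (sq_nonneg (d 0 + d 1))
    nlinarith

/-- Bumps whose product oscillates much faster in the second variable than in the first. -/
theorem exists_bumps {K m h β : ℝ} (hK : 0 < K) (hh : 0 < h) (hβ : 0 < β) :
    ∃ A B : ℝ → ℝ, ContDiff ℝ 2 A ∧ ContDiff ℝ 2 B ∧ tsupport A ⊆ Metric.closedBall m h ∧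
      tsupport B ⊆ Metric.closedBall 0 β ∧
      K * ((∫ s, deriv A s ^ 2) * ∫ s, B s ^ 2) < (∫ s, A s ^ 2) * ∫ s, deriv B s ^ 2 := by
  let A : ContDiffBump m := ⟨h / 2, h, by positivity, by linarith⟩
  let ψ : ContDiffBump (0 : ℝ) := ⟨1 / 2, 1, by norm_num, by norm_num⟩
  have cψ : ContDiff ℝ 2 ψ := ψ.contDiff
  have cA : ContDiff ℝ 2 A := A.contDiff
  have I1 : 0 < ∫ s, deriv ψ s ^ 2 := by
    have hc : Continuous fun s => deriv ψ s ^ 2 := (cψ.continuous_deriv (by norm_num)).pow 2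
    have hs : HasCompactSupport fun s => deriv ψ s ^ 2 :=
      ψ.hasCompactSupport.deriv.comp_left (g := fun y : ℝ => y ^ 2) (by norm_num)
    obtain ⟨s, hs0⟩ : ∃ s, deriv ψ s ≠ 0 := by
      by_contra! hz
      have h1 := is_const_of_deriv_eq_zero (cψ.differentiable (by norm_num)) hz 0 1
      rw [ψ.one_of_mem_closedBall (by simp [ψ]), ψ.zero_of_le_dist (by simp [ψ])] at h1
      exact one_ne_zero h1
    exact hc.integral_pos_of_hasCompactSupport_nonneg_nonzero hs (fun _ => sq_nonneg _)
      (x := s) (pow_ne_zero 2 hs0)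
  have I0 : 0 < ∫ s, A s ^ 2 := by
    have hs : HasCompactSupport fun s => A s ^ 2 :=
      A.hasCompactSupport.comp_left (g := fun y : ℝ => y ^ 2) (by norm_num)
    refine (cA.continuous.pow 2).integral_pos_of_hasCompactSupport_nonneg_nonzero hs
      (fun _ => sq_nonneg _) (x := m) ?_
    rw [A.one_of_mem_closedBall (by simp [A]; positivity)]
    norm_num
  set P := K * ((∫ s, deriv A s ^ 2) * ∫ s, ψ s ^ 2) with hP
  set Q := (∫ s, A s ^ 2) * ∫ s, deriv ψ s ^ 2 with hQ
  have hP0 : 0 ≤ P := mul_nonneg hK.le (mul_nonneg (integral_nonneg fun _ => sq_nonneg _)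
    (integral_nonneg fun _ => sq_nonneg _))
  have hQ0 : 0 < Q := mul_pos I0 I1
  obtain ⟨b, hb0, hbβ, hbPQ⟩ : ∃ b, 0 < b ∧ b ≤ β ∧ P * b ^ 2 < Q := by
    have h1 : Tendsto (fun b : ℝ => P * b ^ 2) (𝓝[>] 0) (𝓝 0) := by
      have : Tendsto (fun b : ℝ => P * b ^ 2) (𝓝 0) (𝓝 (P * 0 ^ 2)) :=
        (by fun_prop : Continuous fun b : ℝ => P * b ^ 2).tendsto 0
      simpa using this.mono_left nhdsWithin_le_nhds
    have h2 : ∀ᶠ b in 𝓝[>] (0 : ℝ), b ∈ Ioc 0 β := Ioc_mem_nhdsGT hβ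
    obtain ⟨b, hb, hb'⟩ := ((h1.eventually (gt_mem_nhds hQ0)).and h2).exists
    exact ⟨b, hb'.1, hb'.2, hb⟩
  have hder : ∀ s, deriv (fun s => ψ (s / b)) s = deriv ψ (s / b) / b := by
    intro s
    have h1 : HasDerivAt (fun s : ℝ => s / b) (1 / b) s := (hasDerivAt_id s).div_const b
    have h2 := (cψ.differentiable (by norm_num) (s / b)).hasDerivAt.comp s h1
    rw [show deriv (fun s => ψ (s / b)) s = _ from h2.deriv]
    ring
  refine ⟨A, fun s => ψ (s / b), cA, cψ.comp (contDiff_id.div_const b), A.tsupport_eq.subset,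
    ?_, ?_⟩
  · refine closure_minimal (fun s hs => ?_) Metric.isClosed_closedBall
    have h1 : s / b ∈ Function.support ψ := hs
    rw [ψ.support_eq] at h1
    simp only [Metric.mem_ball, dist_zero_right, Real.norm_eq_abs, abs_div, abs_of_pos hb0,
      ψ, div_lt_one hb0] at h1
    simp only [Metric.mem_closedBall, dist_zero_right, Real.norm_eq_abs]
    linarith
  · have e1 : ∫ s, ψ (s / b) ^ 2 = b * ∫ s, ψ s ^ 2 := by
      rw [Measure.integral_comp_div (fun s => ψ s ^ 2) b, abs_of_pos hb0, smul_eq_mul]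
    have e2 : ∫ s, deriv (fun s => ψ (s / b)) s ^ 2 = (∫ s, deriv ψ s ^ 2) / b := by
      simp only [hder, div_pow]
      rw [integral_div, Measure.integral_comp_div (fun s => deriv ψ s ^ 2) b, abs_of_pos hb0,
        smul_eq_mul]
      field_simp
    rw [e1, e2, ← mul_div_assoc, lt_div_iff₀ hb0]
    calc _ = P * b ^ 2 := by rw [hP]; ring
      _ < Q := hbPQ

theorem exists_small_bumps {K m h β κ : ℝ} (hK : 0 < K) (hh : 0 < h) (hβ : 0 < β)
    (hκ : 0 < κ) :
    ∃ (A B : ℝ → ℝ) (a b : ℝ), ContDiff ℝ 2 A ∧ ContDiff ℝ 2 B ∧ DerivBound A a ∧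
      DerivBound B b ∧ a * b ≤ κ ∧ tsupport A ⊆ Metric.closedBall m h ∧
      tsupport B ⊆ Metric.closedBall 0 β ∧
      K * ((∫ s, deriv A s ^ 2) * ∫ s, B s ^ 2) < (∫ s, A s ^ 2) * ∫ s, deriv B s ^ 2 := by
  obtain ⟨A, B, hA, hB, sA, sB, hAB⟩ := exists_bumps (m := m) hK hh hβ
  obtain ⟨a, ha0, ha⟩ := HasCompactSupport.exists_derivBound hA
    ((isCompact_closedBall m h).of_isClosed_subset (isClosed_tsupport A) sA)
  obtain ⟨b, hb0, hb⟩ := HasCompactSupport.exists_derivBound hB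
    ((isCompact_closedBall 0 β).of_isClosed_subset (isClosed_tsupport B) sB)
  set ε := κ / (a * b) with hε
  have hε0 : 0 < ε := by positivity
  refine ⟨A, fun s => ε * B s, a, |ε| * b, hA, contDiff_const.mul hB, ha, hb.const_mul ε, ?_, sA,
    (closure_mono fun s hs => ?_).trans sB, ?_⟩
  · rw [abs_of_pos hε0, hε]
    exact le_of_eq (by field_simp)
  · exact right_ne_zero_of_mul (Function.mem_support.1 hs)
  · have h1 : ∀ s, deriv (fun s => ε * B s) s = ε * deriv B s := fun s => deriv_const_mul_field ε
    simp only [h1, mul_pow, integral_const_mul]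
    have := mul_lt_mul_of_pos_left hAB (pow_pos hε0 2)
    linarith

theorem resistance_second_difference {V : Type*} [NormedAddCommGroup V] [InnerProductSpace ℝ V]
    (p q : V) :
    1 / (‖p + q‖ ^ 2 + 1) + 1 / (‖p - q‖ ^ 2 + 1) - 2 * (1 / (‖p‖ ^ 2 + 1)) =
      2 * (4 * inner ℝ p q ^ 2 - (1 + ‖p‖ ^ 2 + ‖q‖ ^ 2) * ‖q‖ ^ 2) /
        ((‖p + q‖ ^ 2 + 1) * (‖p - q‖ ^ 2 + 1) * (‖p‖ ^ 2 + 1)) := by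
  have h1 : ‖p + q‖ ^ 2 + 1 ≠ 0 := by positivity
  have h2 : ‖p - q‖ ^ 2 + 1 ≠ 0 := by positivity
  rw [norm_add_sq_real] at h1 ⊢
  rw [norm_sub_sq_real] at h2 ⊢
  field_simp
  ring

/-- For gradients `p` that are nearly parallel to the first axis, perturbations along the second
axis decrease the average resistance. -/
theorem resistance_second_difference_le {S τ : ℝ} (hτ : 0 ≤ τ) (hτS : τ ≤ S)
    {x q : EuclideanSpace ℝ (Fin 2)} (hx : x ≠ 0) (hx1 : 4 * |x 1| ≤ ‖x‖) (hq : ‖q‖ ≤ 1) :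
    1 / (‖(-τ / ‖x‖) • x + q‖ ^ 2 + 1) + 1 / (‖(-τ / ‖x‖) • x - q‖ ^ 2 + 1) -
        2 * (1 / (τ ^ 2 + 1)) ≤
      16 * S ^ 2 * q 0 ^ 2 - 2 / ((S + 1) ^ 2 + 1) ^ 3 * q 1 ^ 2 := by
  have hx0 : 0 < ‖x‖ := norm_pos_iff.2 hx
  set p := (-τ / ‖x‖) • x with hp
  have hpn : ‖p‖ = τ := by
    rw [hp, norm_smul, Real.norm_eq_abs, abs_div, abs_neg, abs_norm, abs_of_nonneg hτ]
    field_simp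
  have h := resistance_second_difference p q
  rw [hpn] at h
  rw [h]
  have hq2 : ‖q‖ ^ 2 = q 0 ^ 2 + q 1 ^ 2 := by
    simp [EuclideanSpace.norm_sq_eq, Fin.sum_univ_two]
  have hx2 : ‖x‖ ^ 2 = x 0 ^ 2 + x 1 ^ 2 := by
    simp [EuclideanSpace.norm_sq_eq, Fin.sum_univ_two]
  have hpq : inner ℝ p q * ‖x‖ = -τ * (x 0 * q 0 + x 1 * q 1) := by
    rw [hp, inner_smul_left]
    simp [PiLp.inner_apply, Fin.sum_univ_two]
    field_simp
  have hsq : 16 * x 1 ^ 2 ≤ ‖x‖ ^ 2 := by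
    have := pow_le_pow_left₀ (by positivity) hx1 2
    rw [mul_pow, sq_abs] at this
    linarith
  have hinner : 4 * inner ℝ p q ^ 2 ≤ 8 * τ ^ 2 * q 0 ^ 2 + τ ^ 2 / 2 * q 1 ^ 2 := by
    refine le_of_mul_le_mul_right ?_ (by positivity : 0 < ‖x‖ ^ 2)
    have : 4 * inner ℝ p q ^ 2 * ‖x‖ ^ 2 = 4 * τ ^ 2 * (x 0 * q 0 + x 1 * q 1) ^ 2 := by
      calc _ = 4 * (inner ℝ p q * ‖x‖) ^ 2 := by ring
        _ = _ := by rw [hpq]; ring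
    rw [this]
    have i1 : (x 0 * q 0 + x 1 * q 1) ^ 2 ≤ 2 * (x 0 ^ 2 * q 0 ^ 2 + x 1 ^ 2 * q 1 ^ 2) := by
      nlinarith [sq_nonneg (x 0 * q 0 - x 1 * q 1)]
    have i2 : x 0 ^ 2 * q 0 ^ 2 ≤ ‖x‖ ^ 2 * q 0 ^ 2 := by
      nlinarith [mul_nonneg (sq_nonneg (x 1)) (sq_nonneg (q 0))]
    have i3 := mul_le_mul_of_nonneg_right hsq (sq_nonneg (q 1))
    nlinarith [mul_le_mul_of_nonneg_left i1 (sq_nonneg τ),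
      mul_le_mul_of_nonneg_left i2 (sq_nonneg τ), mul_le_mul_of_nonneg_left i3 (sq_nonneg τ)]
  have hnum : 4 * inner ℝ p q ^ 2 - (1 + τ ^ 2 + ‖q‖ ^ 2) * ‖q‖ ^ 2 ≤
      8 * S ^ 2 * q 0 ^ 2 - q 1 ^ 2 := by
    have i1 : τ ^ 2 * q 0 ^ 2 ≤ S ^ 2 * q 0 ^ 2 :=
      mul_le_mul_of_nonneg_right (pow_le_pow_left₀ hτ hτS 2) (sq_nonneg _)
    nlinarith [mul_nonneg (sq_nonneg τ) (sq_nonneg (q 1)),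
      mul_nonneg (sq_nonneg τ) (sq_nonneg (q 0)), sq_nonneg (‖q‖ ^ 2), sq_nonneg (q 0)]
  set den := (‖p + q‖ ^ 2 + 1) * (‖p - q‖ ^ 2 + 1) * (τ ^ 2 + 1) with hden
  have hden1 : 1 ≤ den := by
    refine one_le_mul_of_one_le_of_one_le (one_le_mul_of_one_le_of_one_le ?_ ?_) ?_ <;>
      exact le_add_of_nonneg_left (sq_nonneg _)
  have hdenD : den ≤ ((S + 1) ^ 2 + 1) ^ 3 := by
    have b1 : ‖p + q‖ ^ 2 ≤ (S + 1) ^ 2 := pow_le_pow_left₀ (norm_nonneg _)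
      ((norm_add_le _ _).trans (by linarith)) 2
    have b2 : ‖p - q‖ ^ 2 ≤ (S + 1) ^ 2 := pow_le_pow_left₀ (norm_nonneg _)
      ((norm_sub_le _ _).trans (by linarith)) 2
    have b3 : τ ^ 2 ≤ (S + 1) ^ 2 := pow_le_pow_left₀ hτ (by linarith) 2
    calc den ≤ ((S + 1) ^ 2 + 1) * ((S + 1) ^ 2 + 1) * ((S + 1) ^ 2 + 1) := by
          rw [hden]; gcongr
      _ = _ := by ring
  have hden0 : 0 < den := by linarith
  calc _ ≤ 2 * (8 * S ^ 2 * q 0 ^ 2 - q 1 ^ 2) / den := by gcongr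
    _ = 16 * S ^ 2 * q 0 ^ 2 / den - 2 * q 1 ^ 2 / den := by ring
    _ ≤ 16 * S ^ 2 * q 0 ^ 2 / 1 - 2 * q 1 ^ 2 / ((S + 1) ^ 2 + 1) ^ 3 := by gcongr
    _ = _ := by ring

theorem exists_profile_potential {ρ c M : ℝ} {t : ℝ → ℝ} (hc : 0 < c) (ht : Continuous t)
    (ht0 : t 0 = 0)
    (hmono : ∀ a ∈ Icc (0 : ℝ) 1, ∀ b ∈ Icc (0 : ℝ) 1, a ≤ b → c * (b - a) ≤ t b - t a)
    (hM : ∫ r in ρ..1, t r = M) :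
    ∃ Φ : ℝ → ℝ, (∀ r, HasDerivAt Φ (-t r) r) ∧ StrictAntiOn Φ (Icc 0 1) ∧ Φ ρ = M ∧ Φ 1 = 0 ∧
      ConcaveOn ℝ (Icc 0 1) (fun r => Φ r + c / 2 * r ^ 2) ∧
      AntitoneOn (fun r => Φ r + c / 2 * r ^ 2) (Icc 0 1) := by
  have hd : ∀ r, HasDerivAt (fun r => M - ∫ x in ρ..r, t x) (-t r) r := fun r =>
    (intervalIntegral.integral_hasDerivAt_right (ht.intervalIntegrable _ _)
      (ht.stronglyMeasurableAtFilter _ _) ht.continuousAt).const_sub M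
  have hd2 : ∀ r, HasDerivAt (fun r => (M - ∫ x in ρ..r, t x) + c / 2 * r ^ 2)
      (-t r + c * r) r := by
    intro r
    have h := (hd r).add ((hasDerivAt_pow 2 r).const_mul (c / 2))
    refine h.congr_deriv ?_
    push_cast
    ring
  have hc1 : ContinuousOn (fun r => M - ∫ x in ρ..r, t x) (Icc 0 1) :=
    fun r _ => (hd r).continuousAt.continuousWithinAt
  have hc2 : ContinuousOn (fun r => (M - ∫ x in ρ..r, t x) + c / 2 * r ^ 2) (Icc 0 1) :=
    fun r _ => (hd2 r).continuousAt.continuousWithinAt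
  have hlow : ∀ r ∈ Ioo (0 : ℝ) 1, c * r ≤ t r := by
    intro r hr
    have := hmono 0 ⟨le_rfl, zero_le_one⟩ r (Ioo_subset_Icc_self hr) hr.1.le
    rwa [ht0, sub_zero, sub_zero] at this
  refine ⟨fun r => M - ∫ x in ρ..r, t x, hd, ?_, by simp, by simp [hM], ?_, ?_⟩
  · refine strictAntiOn_of_deriv_neg (convex_Icc 0 1) hc1 fun r hr => ?_
    rw [interior_Icc] at hr
    rw [(hd r).deriv]
    have := hlow r hr
    have := mul_pos hc hr.1
    linarith
  · refine AntitoneOn.concaveOn_of_deriv (convex_Icc 0 1) hc2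
      (fun r _ => (hd2 r).differentiableAt.differentiableWithinAt) fun a ha b hb hab => ?_
    rw [interior_Icc] at ha hb
    rw [(hd2 a).deriv, (hd2 b).deriv]
    have := hmono a (Ioo_subset_Icc_self ha) b (Ioo_subset_Icc_self hb) hab
    linarith
  · refine antitoneOn_of_deriv_nonpos (convex_Icc 0 1) hc2
      (fun r _ => (hd2 r).differentiableAt.differentiableWithinAt) fun r hr => ?_
    rw [interior_Icc] at hr
    rw [(hd2 r).deriv]
    linarith [hlow r hr]

theorem mem_Omega_iff {x : EuclideanSpace ℝ (Fin 2)} : x ∈ Omega ↔ ‖x‖ < 1 := by simp [Omega]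

theorem concaveOn_Omega_comp_norm {ψ : ℝ → ℝ} (hψ : ConcaveOn ℝ (Icc 0 1) ψ)
    (hanti : AntitoneOn ψ (Icc 0 1)) : ConcaveOn ℝ Omega fun x => ψ ‖x‖ := by
  have hconv : Convex ℝ Omega := convex_ball 0 1
  have hm : ∀ x ∈ Omega, ‖x‖ ∈ Icc (0 : ℝ) 1 := fun x hx =>
    ⟨norm_nonneg x, (mem_Omega_iff.1 hx).le⟩
  refine ⟨hconv, fun x hx y hy a b ha hb hab => ?_⟩
  refine (hψ.2 (hm x hx) (hm y hy) ha hb hab).trans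
    (hanti (hm _ (hconv hx hy ha hb hab)) (hψ.1 (hm x hx) (hm y hy) ha hb hab) ?_)
  refine (norm_add_le _ _).trans (le_of_eq ?_)
  rw [norm_smul, norm_smul, Real.norm_of_nonneg ha, Real.norm_of_nonneg hb, smul_eq_mul,
    smul_eq_mul]

theorem concaveOn_Omega_add_mul_coordinates {Φ A B : ℝ → ℝ} {a b c : ℝ}
    (hΦ : ConcaveOn ℝ (Icc 0 1) fun r => Φ r + c / 2 * r ^ 2)
    (hanti : AntitoneOn (fun r => Φ r + c / 2 * r ^ 2) (Icc 0 1))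
    (hA : ContDiff ℝ 2 A) (hB : ContDiff ℝ 2 B) (hAa : DerivBound A a) (hBb : DerivBound B b)
    (hc : a * b ≤ c / 2) :
    ConcaveOn ℝ Omega fun x => Φ ‖x‖ + A (x 0) * B (x 1) := by
  have hconv : Convex ℝ Omega := convex_ball 0 1
  have hBb' : DerivBound (fun s => (-1) * B s) b := by simpa using hBb.const_mul (-1)
  have h1 := (convexOn_sq_norm_add_mul_coordinates hA (contDiff_const.mul hB) hAa hBb').subset
    (subset_univ Omega) hconv
  have h2 : ConvexOn ℝ Omega fun x => (c / 2 - a * b) • (‖x‖ ^ 2) :=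
    ((convexOn_norm hconv).pow (fun x _ => norm_nonneg x) 2).smul (sub_nonneg.2 hc)
  refine ((concaveOn_Omega_comp_norm hΦ hanti).sub (h1.add h2)).congr fun x _ => ?_
  simp only [Pi.sub_apply, Pi.add_apply, smul_eq_mul]
  ring

theorem norm_mem_Icc_of_mem_box {m h β : ℝ} (hm : h ≤ m) {x : EuclideanSpace ℝ (Fin 2)}
    (h0 : x 0 ∈ Metric.closedBall m h) (h1 : x 1 ∈ Metric.closedBall 0 β) :
    ‖x‖ ∈ Icc (m - h) (m + h + β) ∧ |x 1| ≤ β := by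
  rw [Metric.mem_closedBall, Real.dist_eq, abs_le] at h0
  rw [Metric.mem_closedBall, Real.dist_eq, sub_zero] at h1
  have hx2 : ‖x‖ ^ 2 = x 0 ^ 2 + x 1 ^ 2 := by
    simp [EuclideanSpace.norm_sq_eq, Fin.sum_univ_two]
  have e0 : |x 0| ≤ ‖x‖ := by
    refine abs_le_of_sq_le_sq (by nlinarith [sq_nonneg (x 1)]) (norm_nonneg x)
  have e1 : ‖x‖ ≤ |x 0| + |x 1| := by
    refine le_of_sq_le_sq ?_ (by positivity)
    rw [hx2, add_sq, sq_abs, sq_abs]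
    have := mul_nonneg (abs_nonneg (x 0)) (abs_nonneg (x 1))
    linarith
  rw [abs_of_nonneg (by linarith : 0 ≤ x 0)] at e0 e1
  exact ⟨⟨by linarith, by linarith⟩, h1⟩

/-- The gradient of `x ↦ A (x 0) * B (x 1)`. -/
noncomputable def mulGradient (A B : ℝ → ℝ) (x : EuclideanSpace ℝ (Fin 2)) :
    EuclideanSpace ℝ (Fin 2) :=
  !₂[deriv A (x 0) * B (x 1), A (x 0) * deriv B (x 1)]

theorem eq_zero_and_mulGradient_eq_zero {A B : ℝ → ℝ} {m h β : ℝ}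
    (sA : tsupport A ⊆ Metric.closedBall m h) (sB : tsupport B ⊆ Metric.closedBall 0 β)
    {x : EuclideanSpace ℝ (Fin 2)}
    (hx : ¬(x 0 ∈ Metric.closedBall m h ∧ x 1 ∈ Metric.closedBall 0 β)) :
    A (x 0) * B (x 1) = 0 ∧ mulGradient A B x = 0 := by
  have hz : ∀ {f : ℝ → ℝ} {U : Set ℝ} {s : ℝ}, tsupport f ⊆ U → s ∉ U →
      f s = 0 ∧ deriv f s = 0 := by
    intro f U s hf hs
    exact ⟨image_eq_zero_of_notMem_tsupport fun h => hs (hf h), by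
      by_contra h
      exact hs (hf (support_deriv_subset h))⟩
  by_cases h0 : x 0 ∈ Metric.closedBall m h
  · have h1 := hz sB fun h1 => hx ⟨h0, h1⟩
    refine ⟨by rw [h1.1, mul_zero], ?_⟩
    ext i
    fin_cases i <;> simp [mulGradient, h1]
  · have h1 := hz sA h0
    refine ⟨by rw [h1.1, zero_mul], ?_⟩
    ext i
    fin_cases i <;> simp [mulGradient, h1]

section Competitor

variable {Φ t A B : ℝ → ℝ} {M ρ c a b m h β : ℝ}

theorem competitor_mem_Icc (hM : 0 ≤ M) (hanti : StrictAntiOn Φ (Icc 0 1)) (hΦ1 : Φ 1 = 0)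
    (hAa : DerivBound A a) (hBb : DerivBound B b) (sA : tsupport A ⊆ Metric.closedBall m h)
    (sB : tsupport B ⊆ Metric.closedBall 0 β) (hm : h ≤ m) (hr : m + h + β < 1)
    (hab : a * b ≤ Φ (m + h + β)) {x : EuclideanSpace ℝ (Fin 2)} (hx : x ∈ Omega) :
    min M (Φ ‖x‖ + A (x 0) * B (x 1)) ∈ Icc 0 M := by
  refine ⟨le_min hM ?_, min_le_left _ _⟩
  rw [mem_Omega_iff] at hx
  by_cases hbox : x 0 ∈ Metric.closedBall m h ∧ x 1 ∈ Metric.closedBall 0 β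
  · obtain ⟨⟨-, h2⟩, -⟩ := norm_mem_Icc_of_mem_box hm hbox.1 hbox.2
    have h3 := hanti.antitoneOn ⟨norm_nonneg x, hx.le⟩ ⟨(norm_nonneg x).trans h2, hr.le⟩ h2
    have h4 : |A (x 0) * B (x 1)| ≤ a * b := by
      rw [abs_mul]
      exact mul_le_mul (hAa _).1 (hBb _).1 (abs_nonneg _) hAa.nonneg
    linarith [neg_le_of_abs_le h4]
  · rw [(eq_zero_and_mulGradient_eq_zero sA sB hbox).1, add_zero, ← hΦ1]
    exact hanti.antitoneOn ⟨norm_nonneg x, hx.le⟩ ⟨zero_le_one, le_rfl⟩ hx.le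

theorem gradient_competitor (hΦ : ∀ r, HasDerivAt Φ (-t r) r) (hanti : StrictAntiOn Φ (Icc 0 1))
    (hρ : ρ ∈ Ioo 0 1) (hΦρ : Φ ρ = M) (hA : ContDiff ℝ 2 A) (hB : ContDiff ℝ 2 B)
    (hAa : DerivBound A a) (hBb : DerivBound B b) (sA : tsupport A ⊆ Metric.closedBall m h)
    (sB : tsupport B ⊆ Metric.closedBall 0 β) (hm : h ≤ m) (hρm : ρ < m - h)
    (hab : a * b ≤ M - Φ (m - h)) {x : EuclideanSpace ℝ (Fin 2)} (hx : x ∈ Omega) (hx0 : x ≠ 0)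
    (hxρ : ‖x‖ ≠ ρ) :
    gradient (fun y : EuclideanSpace ℝ (Fin 2) => min M (Φ ‖y‖ + A (y 0) * B (y 1))) x =
      (-(if ‖x‖ ≤ ρ then 0 else t ‖x‖) / ‖x‖) • x + mulGradient A B x := by
  rw [mem_Omega_iff] at hx
  have hout : ∀ y : EuclideanSpace ℝ (Fin 2), ‖y‖ < ρ →
      A (y 0) * B (y 1) = 0 ∧ mulGradient A B y = 0 := by
    intro y hy
    refine eq_zero_and_mulGradient_eq_zero sA sB fun hbox => ?_
    have := (norm_mem_Icc_of_mem_box hm hbox.1 hbox.2).1.1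
    linarith
  rcases hxρ.lt_or_gt with hlt | hgt
  · have hev : (fun y : EuclideanSpace ℝ (Fin 2) => min M (Φ ‖y‖ + A (y 0) * B (y 1))) =ᶠ[𝓝 x]
        fun _ => M := by
      filter_upwards [continuous_norm.continuousAt.eventually_lt_const hlt] with y hy
      rw [(hout y hy).1, add_zero, ← hΦρ]
      exact min_eq_left (hanti.antitoneOn ⟨norm_nonneg y, hy.le.trans hρ.2.le⟩
        (Ioo_subset_Icc_self hρ) hy.le)
    rw [hev.gradient_eq, (hasGradientAt_const x M).gradient, (hout x hlt).2, if_pos hlt.le]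
    simp
  · have hev : (fun y : EuclideanSpace ℝ (Fin 2) => min M (Φ ‖y‖ + A (y 0) * B (y 1))) =ᶠ[𝓝 x]
        fun y => Φ ‖y‖ + A (y 0) * B (y 1) := by
      filter_upwards [continuous_norm.continuousAt.eventually_const_lt hgt,
        continuous_norm.continuousAt.eventually_lt_const hx] with y hy hy1
      refine min_eq_right ?_
      have hyI : ‖y‖ ∈ Icc (0 : ℝ) 1 := ⟨norm_nonneg y, hy1.le⟩
      by_cases hbox : y 0 ∈ Metric.closedBall m h ∧ y 1 ∈ Metric.closedBall 0 β
      · obtain ⟨⟨h2, -⟩, -⟩ := norm_mem_Icc_of_mem_box hm hbox.1 hbox.2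
        have h3 := hanti.antitoneOn ⟨by linarith, h2.trans hy1.le⟩ hyI h2
        have h4 : |A (y 0) * B (y 1)| ≤ a * b := by
          rw [abs_mul]
          exact mul_le_mul (hAa _).1 (hBb _).1 (abs_nonneg _) hAa.nonneg
        linarith [le_of_abs_le h4]
      · rw [(eq_zero_and_mulGradient_eq_zero sA sB hbox).1, add_zero, ← hΦρ]
        exact hanti.antitoneOn (Ioo_subset_Icc_self hρ) hyI hy.le
    have h1 := (hasGradientAt_comp_norm hx0 (hΦ ‖x‖)).hasFDerivAt.add
      (hasGradientAt_mul_coordinates (hA.differentiable (by norm_num))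
        (hB.differentiable (by norm_num)) x).hasFDerivAt
    rw [← map_add, ← hasGradientAt_iff_hasFDerivAt] at h1
    rw [hev.gradient_eq, if_neg hgt.not_ge]
    exact h1.gradient

end Competitor

theorem J_add_J_lt {v w : EuclideanSpace ℝ (Fin 2) → ℝ} {s A B : ℝ → ℝ} {S m h β : ℝ}
    (hs : Measurable s) (hsS : ∀ r ∈ Ioo (0 : ℝ) 1, s r ∈ Icc 0 S)
    (hA : ContDiff ℝ 2 A) (hB : ContDiff ℝ 2 B) (sA : tsupport A ⊆ Metric.closedBall m h)
    (sB : tsupport B ⊆ Metric.closedBall 0 β) (hm : h ≤ m) (hr : m + h + β < 1)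
    (hβ : 4 * β ≤ m - h) (hq : ∀ x, ‖mulGradient A B x‖ ≤ 1)
    (hAB : 8 * S ^ 2 * ((S + 1) ^ 2 + 1) ^ 3 * ((∫ s, deriv A s ^ 2) * ∫ s, B s ^ 2) <
      (∫ s, A s ^ 2) * ∫ s, deriv B s ^ 2)
    (hv : ∀ᵐ x, x ∈ Omega → gradient v x = (-s ‖x‖ / ‖x‖) • x + mulGradient A B x)
    (hw : ∀ᵐ x, x ∈ Omega → gradient w x = (-s ‖x‖ / ‖x‖) • x - mulGradient A B x) :
    J v + J w < 2 * ∫ x in Omega, 1 / (s ‖x‖ ^ 2 + 1) := by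
  have hΩ : MeasurableSet Omega := Metric.isOpen_ball.measurableSet
  set D := ((S + 1) ^ 2 + 1) ^ 3 with hD
  have hD0 : 0 < D := by positivity
  have iv := integrableOn_Omega_resistance (measurable_norm_gradient v)
  have iw := integrableOn_Omega_resistance (measurable_norm_gradient w)
  have is : IntegrableOn (fun x : EuclideanSpace ℝ (Fin 2) => 1 / (s ‖x‖ ^ 2 + 1)) Omega :=
    integrableOn_Omega_resistance (hs.comp measurable_norm)
  have hbox : ∀ x : EuclideanSpace ℝ (Fin 2), mulGradient A B x ≠ 0 →
      ‖x‖ < 1 ∧ 4 * |x 1| ≤ ‖x‖ := by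
    intro x hx
    by_contra hcon
    refine hx (eq_zero_and_mulGradient_eq_zero sA sB fun hb => hcon ?_).2
    obtain ⟨⟨h1, h2⟩, h3⟩ := norm_mem_Icc_of_mem_box hm hb.1 hb.2
    exact ⟨by linarith, by linarith⟩
  have dA := hA.continuous_deriv (by norm_num)
  have dB := hB.continuous_deriv (by norm_num)
  have cA := hA.continuous
  have cB := hB.continuous
  have cc : ∀ i : Fin 2, Continuous fun x : EuclideanSpace ℝ (Fin 2) => mulGradient A B x i := by
    intro i
    fin_cases i <;> simp [mulGradient] <;> fun_prop
  have iq : ∀ i : Fin 2, Integrable fun x : EuclideanSpace ℝ (Fin 2) =>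
      mulGradient A B x i ^ 2 := by
    intro i
    refine ((cc i).pow 2).integrable_of_hasCompactSupport
      (HasCompactSupport.intro (isCompact_closedBall 0 1) fun x hx => ?_)
    have : mulGradient A B x = 0 := by
      by_contra hne
      refine hx ?_
      simpa using (hbox x hne).1.le
    simp [this]
  have iQ := ((iq 0).const_mul (16 * S ^ 2)).sub ((iq 1).const_mul (2 / D))
  have hle : ∫ x in Omega, (1 / (‖gradient v x‖ ^ 2 + 1) + 1 / (‖gradient w x‖ ^ 2 + 1) -
      2 * (1 / (s ‖x‖ ^ 2 + 1))) ≤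
      ∫ x in Omega, (16 * S ^ 2 * mulGradient A B x 0 ^ 2 - 2 / D * mulGradient A B x 1 ^ 2) := by
    refine setIntegral_mono_ae_restrict ((iv.add iw).sub (is.const_mul 2)) iQ.integrableOn ?_
    rw [EventuallyLE, ae_restrict_iff' hΩ]
    filter_upwards [hv, hw, Measure.ae_ne volume 0] with x hxv hxw hx0 hx
    simp only [hxv hx, hxw hx]
    have hx1 := mem_Omega_iff.1 hx
    have hxs := hsS ‖x‖ ⟨norm_pos_iff.2 hx0, hx1⟩
    by_cases hqx : mulGradient A B x = 0
    · have hp : ‖(-s ‖x‖ / ‖x‖) • x‖ = s ‖x‖ := by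
        rw [norm_smul, Real.norm_eq_abs, abs_div, abs_neg, abs_norm, abs_of_nonneg hxs.1,
          div_mul_cancel₀ _ (norm_ne_zero_iff.2 hx0)]
      simp only [hqx, add_zero, sub_zero, hp]
      simp
      linarith
    · exact resistance_second_difference_le hxs.1 hxs.2 hx0 (hbox x hqx).2 (hq x)
  have hQ : ∫ x in Omega, (16 * S ^ 2 * mulGradient A B x 0 ^ 2 -
      2 / D * mulGradient A B x 1 ^ 2) = 16 * S ^ 2 * ((∫ s, deriv A s ^ 2) * ∫ s, B s ^ 2) -
        2 / D * ((∫ s, A s ^ 2) * ∫ s, deriv B s ^ 2) := by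
    rw [setIntegral_eq_integral_of_forall_compl_eq_zero, integral_sub ((iq 0).const_mul _)
      ((iq 1).const_mul _), integral_const_mul, integral_const_mul, ← integral_mul_coordinates,
      ← integral_mul_coordinates]
    · simp [mulGradient, mul_pow]
    · intro x hx
      have : mulGradient A B x = 0 := by
        by_contra hne
        exact hx (mem_Omega_iff.2 (hbox x hne).1)
      simp [this]
  have hJ : ∫ x in Omega, (1 / (‖gradient v x‖ ^ 2 + 1) + 1 / (‖gradient w x‖ ^ 2 + 1) -
      2 * (1 / (s ‖x‖ ^ 2 + 1))) = J v + J w - 2 * ∫ x in Omega, 1 / (s ‖x‖ ^ 2 + 1) := by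
    have h1 := integral_sub (iv.add iw) (is.const_mul 2)
    simp only [Pi.add_apply] at h1
    rw [h1, integral_add iv iw, integral_const_mul]
    rfl
  rw [hQ, hJ] at hle
  have hneg : 16 * S ^ 2 * ((∫ s, deriv A s ^ 2) * ∫ s, B s ^ 2) -
      2 / D * ((∫ s, A s ^ 2) * ∫ s, deriv B s ^ 2) < 0 := by
    have := mul_lt_mul_of_pos_left hAB (div_pos two_pos hD0)
    have e : 2 / D * (8 * S ^ 2 * D * ((∫ s, deriv A s ^ 2) * ∫ s, B s ^ 2)) =
        16 * S ^ 2 * ((∫ s, deriv A s ^ 2) * ∫ s, B s ^ 2) := by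
      field_simp
      ring
    linarith
  linarith

theorem norm_mulGradient_le_one {A B : ℝ → ℝ} {a b : ℝ} (hAa : DerivBound A a)
    (hBb : DerivBound B b) (hab : a * b ≤ 1 / 2) (x : EuclideanSpace ℝ (Fin 2)) :
    ‖mulGradient A B x‖ ≤ 1 := by
  have h0 : |deriv A (x 0) * B (x 1)| ≤ 1 / 2 := by
    rw [abs_mul]
    exact (mul_le_mul (hAa _).2.1 (hBb _).1 (abs_nonneg _) hAa.nonneg).trans hab
  have h1 : |A (x 0) * deriv B (x 1)| ≤ 1 / 2 := by
    rw [abs_mul]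
    exact (mul_le_mul (hAa _).1 (hBb _).2.1 (abs_nonneg _) hAa.nonneg).trans hab
  refine le_of_sq_le_sq ?_ zero_le_one
  have h2 : ‖mulGradient A B x‖ ^ 2 =
      (deriv A (x 0) * B (x 1)) ^ 2 + (A (x 0) * deriv B (x 1)) ^ 2 := by
    simp [mulGradient, EuclideanSpace.norm_sq_eq, Fin.sum_univ_two]
  rw [h2, ← sq_abs (deriv A (x 0) * B (x 1)), ← sq_abs (A (x 0) * deriv B (x 1))]
  nlinarith [abs_nonneg (deriv A (x 0) * B (x 1)), abs_nonneg (A (x 0) * deriv B (x 1))]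

theorem mulGradient_neg (A B : ℝ → ℝ) (x : EuclideanSpace ℝ (Fin 2)) :
    mulGradient A (fun s => (-1) * B s) x = -mulGradient A B x := by
  ext i
  fin_cases i <;> simp [mulGradient]

/-- Two concave competitors whose total resistance is smaller than twice that of a radial
profile with slopes `t`. -/
theorem exists_competitors {M ρ c : ℝ} {t : ℝ → ℝ} (hM : 0 < M) (hρ : ρ ∈ Ioo 0 1)
    (hc : 0 < c) (ht : Continuous t) (ht0 : t 0 = 0)
    (hmono : ∀ a ∈ Icc (0 : ℝ) 1, ∀ b ∈ Icc (0 : ℝ) 1, a ≤ b → c * (b - a) ≤ t b - t a)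
    (htM : ∫ r in ρ..1, t r = M) :
    ∃ v w : EuclideanSpace ℝ (Fin 2) → ℝ, ConcaveOn ℝ Omega v ∧ (∀ x ∈ Omega, v x ∈ Icc 0 M) ∧
      ConcaveOn ℝ Omega w ∧ (∀ x ∈ Omega, w x ∈ Icc 0 M) ∧
      J v + J w < 2 * ∫ x in Omega, 1 / ((if ‖x‖ ≤ ρ then 0 else t ‖x‖) ^ 2 + 1) := by
  obtain ⟨Φ, hΦ, hanti, hΦρ, hΦ1, hconc, hconcanti⟩ :=
    exists_profile_potential hc ht ht0 hmono htM
  obtain ⟨hρ0, hρ1⟩ := hρ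
  set m := (ρ + 1) / 2 with hm
  set h := (1 - ρ) / 4 with hh
  set β := min (h / 2) (m / 8) with hβ
  have hβ1 : β ≤ h / 2 := min_le_left _ _
  have hβ2 : β ≤ m / 8 := min_le_right _ _
  have hβ0 : 0 < β := lt_min (by linarith) (by linarith)
  have hr1 : ρ < m - h := by linarith
  have hr2 : m + h + β < 1 := by linarith
  have hΦ_lt : Φ (m - h) < M := by
    rw [← hΦρ]
    exact hanti ⟨hρ0.le, hρ1.le⟩ ⟨by linarith, by linarith⟩ hr1
  have hΦ_pos : 0 < Φ (m + h + β) := by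
    rw [← hΦ1]
    exact hanti ⟨by linarith, by linarith⟩ ⟨zero_le_one, le_rfl⟩ hr2
  have ht_low : ∀ r ∈ Icc (0 : ℝ) 1, c * r ≤ t r := by
    intro r hr
    have := hmono 0 ⟨le_rfl, zero_le_one⟩ r hr hr.1
    rwa [ht0, sub_zero, sub_zero] at this
  have hS : 0 < t 1 := by linarith [ht_low 1 ⟨zero_le_one, le_rfl⟩]
  set κ := min (min (c / 2) (1 / 2)) (min (Φ (m + h + β)) (M - Φ (m - h))) with hκ
  have hκ0 : 0 < κ :=
    lt_min (lt_min (by positivity) (by norm_num)) (lt_min hΦ_pos (sub_pos.2 hΦ_lt))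
  have hκ1 : κ ≤ c / 2 := (min_le_left _ _).trans (min_le_left _ _)
  have hκ2 : κ ≤ 1 / 2 := (min_le_left _ _).trans (min_le_right _ _)
  have hκ3 : κ ≤ Φ (m + h + β) := (min_le_right _ _).trans (min_le_left _ _)
  have hκ4 : κ ≤ M - Φ (m - h) := (min_le_right _ _).trans (min_le_right _ _)
  obtain ⟨A, B, a, b, hA, hB, hAa, hBb, hab, sA, sB, hAB⟩ :=
    exists_small_bumps (K := 8 * t 1 ^ 2 * ((t 1 + 1) ^ 2 + 1) ^ 3) (m := m) (h := h) (β := β)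
      (by positivity) (by linarith) hβ0 hκ0
  have hB' : ContDiff ℝ 2 fun s => (-1) * B s := contDiff_const.mul hB
  have hBb' : DerivBound (fun s => (-1) * B s) b := by simpa using hBb.const_mul (-1)
  have sB' : tsupport (fun s => (-1) * B s) ⊆ Metric.closedBall 0 β := by
    refine (closure_mono fun s hs => ?_).trans sB
    simpa using hs
  have hconcave : ∀ {B : ℝ → ℝ}, ContDiff ℝ 2 B → DerivBound B b →
      ConcaveOn ℝ Omega fun x => min M (Φ ‖x‖ + A (x 0) * B (x 1)) := fun hB hBb =>
    (concaveOn_const M (convex_ball 0 1)).inf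
      (concaveOn_Omega_add_mul_coordinates hconc hconcanti hA hB hAa hBb (hab.trans hκ1))
  have hae : ∀ᵐ x : EuclideanSpace ℝ (Fin 2), x ≠ 0 ∧ ‖x‖ ≠ ρ := by
    have h1 : volume (Metric.sphere (0 : EuclideanSpace ℝ (Fin 2)) ρ) = 0 :=
      Measure.addHaar_sphere volume 0 ρ
    filter_upwards [Measure.ae_ne volume 0, measure_eq_zero_iff_ae_notMem.1 h1] with x hx hxρ
    exact ⟨hx, by simpa using hxρ⟩
  refine ⟨_, _, hconcave hB hBb, fun x hx => competitor_mem_Icc hM.le hanti hΦ1 hAa hBb sA sB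
    (by linarith) hr2 (hab.trans hκ3) hx, hconcave hB' hBb', fun x hx => competitor_mem_Icc hM.le
    hanti hΦ1 hAa hBb' sA sB' (by linarith) hr2 (hab.trans hκ3) hx, ?_⟩
  refine J_add_J_lt (s := fun r => if r ≤ ρ then 0 else t r) (S := t 1)
    (Measurable.ite measurableSet_Iic measurable_const ht.measurable) (fun r hr => ?_) hA hB sA sB
    (by linarith) hr2 (by linarith) (norm_mulGradient_le_one hAa hBb (hab.trans hκ2)) hAB ?_ ?_
  · have hrI := Ioo_subset_Icc_self hr
    split_ifs
    · exact ⟨le_rfl, hS.le⟩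
    · refine ⟨(mul_nonneg hc.le hr.1.le).trans (ht_low r hrI), ?_⟩
      have := hmono r hrI 1 ⟨zero_le_one, le_rfl⟩ hr.2.le
      have := mul_nonneg hc.le (sub_nonneg.2 hr.2.le)
      linarith
  · filter_upwards [hae] with x hx hxΩ
    exact gradient_competitor hΦ hanti ⟨hρ0, hρ1⟩ hΦρ hA hB hAa hBb sA sB (by linarith) hr1
      (hab.trans hκ4) hxΩ hx.1 hx.2
  · filter_upwards [hae] with x hx hxΩ
    rw [sub_eq_add_neg, ← mulGradient_neg]
    exact gradient_competitor hΦ hanti ⟨hρ0, hρ1⟩ hΦρ hA hB' hAa hBb' sA sB' (by linarith) hr1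
      (hab.trans hκ4) hxΩ hx.1 hx.2

/-- Minimizers of Newton's problem in the class of concave functions are not
radially symmetric: there are points of equal norm with different values. -/
theorem minimizer_not_radially_symmetric (M : ℝ) (hM : 0 < M)
    (u : EuclideanSpace ℝ (Fin 2) → ℝ)
    (hu : ConcaveOn ℝ Omega u) (huM : ∀ x ∈ Omega, u x ∈ Icc 0 M)
    (hmin : ∀ v : EuclideanSpace ℝ (Fin 2) → ℝ,
      ConcaveOn ℝ Omega v → (∀ x ∈ Omega, v x ∈ Icc 0 M) → J u ≤ J v) :
    ∃ x ∈ Omega, ∃ y ∈ Omega, ‖x‖ = ‖y‖ ∧ u x ≠ u y := by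
  by_contra! hrad
  obtain ⟨ρ, lam, c, t, hρ, hlam, hc, ht, ht0, hmono, htM, hopt⟩ := exists_newton_profile hM
  obtain ⟨v, w, hv, hvM, hw, hwM, hvw⟩ := exists_competitors hM hρ hc ht ht0 hmono htM
  have hs : (fun r : ℝ => if r ≤ ρ then 0 else t r) = (Ioi ρ).indicator t := by
    funext r
    by_cases hr : r ≤ ρ <;> simp [hr, not_lt.2, not_le.1]
  have hsi : IntegrableOn ((Ioi ρ).indicator t) (Ioo 0 1) :=
    ((ht.integrableOn_Icc (a := 0) (b := 1)).mono_set Ioo_subset_Icc_self).indicator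
      measurableSet_Ioi
  have hsM : ∫ r in Ioo (0 : ℝ) 1, (Ioi ρ).indicator t r = M := by
    rw [setIntegral_indicator measurableSet_Ioi, ← htM,
      intervalIntegral.integral_of_le hρ.2.le, integral_Ioc_eq_integral_Ioo]
    congr 2
    ext r
    simp only [mem_inter_iff, mem_Ioo, mem_Ioi]
    exact ⟨fun h => ⟨h.2, h.1.2⟩, fun h => ⟨⟨hρ.1.trans h.1, h.2⟩, h.1⟩⟩
  have hJu := resistance_le_J_of_radial (s := fun r => if r ≤ ρ then 0 else t r) hlam
    (Measurable.ite measurableSet_Iic measurable_const ht.measurable) (hs ▸ hsi) (hs ▸ hsM)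
    hopt hu huM hrad
  linarith [hmin v hv hvM, hmin w hw hwM]
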